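/- For every d ≥ 0, the integral ∫₀^∞ ((p²+d+8π)/√((p²+d)² + 16π(p²+d)) − 1) p dp converges and equals 4π − ½(√(d(d+16π)) − d). -/

import Mathlib

open MeasureTheory Real

/-!
Put `a = 8π` and `ω(t) = √(t² + 2at)`. In the variable `t = p² + d` the integral becomes
`½ ∫_d^∞ ((t + a) / ω(t) - 1) dt`. Its integrand is the derivative of `ω(t) - t`, and it is
nonnegative because completing the square gives `ω(t) ≤ t + a`. Hence it is integrable as soon as
`ω(t) - t` has a limit at infinity; the limit is `a`, because the deficit `t + a - ω(t)` equals
`a² / (t + a + ω(t))`.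
-/

open Filter Set Topology

section ChangeOfVariables

variable {E : Type*} [NormedAddCommGroup E] [NormedSpace ℝ E]

theorem strictMonoOn_sq_add_const (c : ℝ) :
    StrictMonoOn (fun p : ℝ => p ^ 2 + c) (Ici 0) :=
  (pow_left_strictMonoOn₀ two_ne_zero).add_const c

theorem image_sq_add_const_Ioi_zero (c : ℝ) : (fun p : ℝ => p ^ 2 + c) '' Ioi 0 = Ioi c := by
  have hcont : Continuous fun p : ℝ => p ^ 2 + c := by fun_prop
  have htop : Tendsto (fun p : ℝ => p ^ 2 + c) atTop atTop :=
    tendsto_atTop_add_const_right _ c (tendsto_pow_atTop two_ne_zero)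
  simpa using hcont.continuousOn.image_Ioi_of_strictMonoOn (strictMonoOn_sq_add_const c) htop

theorem hasDerivAt_sq_add_const (c p : ℝ) : HasDerivAt (fun p : ℝ => p ^ 2 + c) (2 * p) p := by
  simpa using (hasDerivAt_pow 2 p).add_const c

theorem integrableOn_Ioi_smul_comp_sq_add_iff (g : ℝ → E) (c : ℝ) :
    IntegrableOn (fun p : ℝ => p • g (p ^ 2 + c)) (Ioi 0) ↔ IntegrableOn g (Ioi c) := by
  rw [← image_sq_add_const_Ioi_zero c,
    integrableOn_image_iff_integrableOn_deriv_smul_of_monotoneOn measurableSet_Ioi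
      (fun p _ => (hasDerivAt_sq_add_const c p).hasDerivWithinAt)
      ((strictMonoOn_sq_add_const c).monotoneOn.mono Ioi_subset_Ici_self)]
  simp only [mul_smul]
  exact (integrable_smul_iff two_ne_zero _).symm

theorem integral_Ioi_smul_comp_sq_add (g : ℝ → E) (c : ℝ) :
    ∫ p in Ioi (0 : ℝ), p • g (p ^ 2 + c) = (2⁻¹ : ℝ) • ∫ t in Ioi c, g t := by
  rw [← image_sq_add_const_Ioi_zero c,
    integral_image_eq_integral_deriv_smul_of_monotoneOn measurableSet_Ioi
      (fun p _ => (hasDerivAt_sq_add_const c p).hasDerivWithinAt)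
      ((strictMonoOn_sq_add_const c).monotoneOn.mono Ioi_subset_Ici_self)]
  simp only [mul_smul, integral_smul]
  rw [inv_smul_smul₀ two_ne_zero]

end ChangeOfVariables

/-- The Bogoliubov excitation energy `ω(t) = √(t² + 2at)` as a function of the kinetic energy `t`,
with coupling `a`. It is the square root in the integrand, and `ω(t) - t` is the antiderivative. The
value is `0` where `t² + 2at < 0`. -/
noncomputable def bogoliubovEnergy (a t : ℝ) : ℝ := √(t ^ 2 + 2 * a * t)

section BogoliubovEnergy

variable {a d t : ℝ}

theorem continuous_bogoliubovEnergy (a : ℝ) : Continuous (bogoliubovEnergy a) := by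
  unfold bogoliubovEnergy
  fun_prop

theorem bogoliubovEnergy_nonneg (a t : ℝ) : 0 ≤ bogoliubovEnergy a t :=
  sqrt_nonneg _

theorem bogoliubovEnergy_pos (ht : 0 < t) (hta : 0 < t + 2 * a) : 0 < bogoliubovEnergy a t :=
  sqrt_pos.mpr (by linear_combination mul_pos ht hta)

theorem bogoliubovEnergy_sq (h : bogoliubovEnergy a t ≠ 0) :
    bogoliubovEnergy a t ^ 2 = t ^ 2 + 2 * a * t :=
  sq_sqrt (sqrt_ne_zero'.mp h).le

theorem bogoliubovEnergy_le_add (h : 0 ≤ t + a) : bogoliubovEnergy a t ≤ t + a :=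
  sqrt_le_iff.mpr ⟨h, by linear_combination sq_nonneg a⟩

theorem hasDerivAt_bogoliubovEnergy (h : bogoliubovEnergy a t ≠ 0) :
    HasDerivAt (bogoliubovEnergy a) ((t + a) / bogoliubovEnergy a t) t := by
  have hradicand : HasDerivAt (fun t => t ^ 2 + 2 * a * t) (2 * (t + a)) t :=
    ((hasDerivAt_pow 2 t).add ((hasDerivAt_id' t).const_mul (2 * a))).congr_deriv (by ring)
  exact (hradicand.sqrt (sqrt_ne_zero'.mp h).ne').congr_deriv (mul_div_mul_left _ _ two_ne_zero)

theorem add_sub_bogoliubovEnergy_eq_div (h : bogoliubovEnergy a t ≠ 0) (hta : 0 < t + a) :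
    t + a - bogoliubovEnergy a t = a ^ 2 / (t + a + bogoliubovEnergy a t) := by
  rw [eq_div_iff (add_pos_of_pos_of_nonneg hta (bogoliubovEnergy_nonneg a t)).ne']
  linear_combination -bogoliubovEnergy_sq h

theorem tendsto_bogoliubovEnergy_sub_self_atTop (a : ℝ) :
    Tendsto (fun t => bogoliubovEnergy a t - t) atTop (𝓝 a) := by
  have hdenom : Tendsto (fun t => t + a + bogoliubovEnergy a t) atTop atTop :=
    (tendsto_atTop_add_const_right atTop a tendsto_id).atTop_add_nonneg (bogoliubovEnergy_nonneg a)
  have hdeficit : Tendsto (fun t => a - a ^ 2 / (t + a + bogoliubovEnergy a t)) atTop (𝓝 a) := by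
    simpa using (hdenom.const_div_atTop (a ^ 2)).const_sub a
  refine hdeficit.congr' ?_
  filter_upwards [eventually_gt_atTop 0, eventually_gt_atTop (-2 * a)] with t ht hta
  have hpos : 0 < bogoliubovEnergy a t := bogoliubovEnergy_pos ht (by linarith)
  rw [← add_sub_bogoliubovEnergy_eq_div hpos.ne' (by linarith)]
  ring

theorem integrableOn_Ioi_add_div_bogoliubovEnergy_sub_one (hd : 0 ≤ d) (hda : 0 ≤ d + 2 * a) :
    IntegrableOn (fun t => (t + a) / bogoliubovEnergy a t - 1) (Ioi d) := by
  have hpos : ∀ t ∈ Ioi d, 0 < bogoliubovEnergy a t := fun t (ht : d < t) =>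
    bogoliubovEnergy_pos (by linarith) (by linarith)
  have hle : ∀ t ∈ Ioi d, bogoliubovEnergy a t ≤ t + a := fun t (ht : d < t) =>
    bogoliubovEnergy_le_add (by linarith)
  exact integrableOn_Ioi_deriv_of_nonneg
    ((continuous_bogoliubovEnergy a).sub continuous_id).continuousWithinAt
    (fun t ht => (hasDerivAt_bogoliubovEnergy (hpos t ht).ne').sub (hasDerivAt_id' t))
    (fun t ht => sub_nonneg.mpr ((one_le_div (hpos t ht)).mpr (hle t ht)))
    (tendsto_bogoliubovEnergy_sub_self_atTop a)

theorem integral_Ioi_add_div_bogoliubovEnergy_sub_one (hd : 0 ≤ d) (hda : 0 ≤ d + 2 * a) :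
    ∫ t in Ioi d, ((t + a) / bogoliubovEnergy a t - 1) = a - (bogoliubovEnergy a d - d) := by
  have hpos : ∀ t ∈ Ioi d, 0 < bogoliubovEnergy a t := fun t (ht : d < t) =>
    bogoliubovEnergy_pos (by linarith) (by linarith)
  exact integral_Ioi_of_hasDerivAt_of_tendsto (f := fun t => bogoliubovEnergy a t - t)
    ((continuous_bogoliubovEnergy a).sub continuous_id).continuousWithinAt
    (fun t ht => (hasDerivAt_bogoliubovEnergy (hpos t ht).ne').sub (hasDerivAt_id' t))
    (integrableOn_Ioi_add_div_bogoliubovEnergy_sub_one hd hda)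
    (tendsto_bogoliubovEnergy_sub_self_atTop a)

end BogoliubovEnergy

/-- for every `d ≥ 0`, the integral
`∫₀^∞ ((p²+d+8π)/√((p²+d)² + 16π(p²+d)) − 1) p dp` converges and equals
`4π − ½(√(d(d+16π)) − d)`. -/
theorem integral_density_constant (d : ℝ) (hd : 0 ≤ d) :
    IntegrableOn
      (fun p : ℝ =>
        ((p ^ 2 + d + 8 * π) / Real.sqrt ((p ^ 2 + d) ^ 2 + 16 * π * (p ^ 2 + d)) - 1) * p)
      (Set.Ioi 0) ∧
    ∫ p in Set.Ioi (0 : ℝ),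
        ((p ^ 2 + d + 8 * π) / Real.sqrt ((p ^ 2 + d) ^ 2 + 16 * π * (p ^ 2 + d)) - 1) * p =
      4 * π - (Real.sqrt (d * (d + 16 * π)) - d) / 2 := by
  let g : ℝ → ℝ := fun t => (t + 8 * π) / bogoliubovEnergy (8 * π) t - 1
  have hda : 0 ≤ d + 2 * (8 * π) := by positivity
  have h16 : 16 * π = 2 * (8 * π) := by ring
  have hg : (fun p : ℝ => ((p ^ 2 + d + 8 * π) /
      √((p ^ 2 + d) ^ 2 + 16 * π * (p ^ 2 + d)) - 1) * p) = fun p => p • g (p ^ 2 + d) := by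
    ext p
    rw [h16, mul_comm]
    rfl
  have hω : bogoliubovEnergy (8 * π) d = √(d * (d + 16 * π)) := by
    rw [bogoliubovEnergy, h16]
    ring_nf
  rw [hg]
  refine ⟨(integrableOn_Ioi_smul_comp_sq_add_iff g d).mpr
    (integrableOn_Ioi_add_div_bogoliubovEnergy_sub_one hd hda), ?_⟩
  calc ∫ p in Ioi (0 : ℝ), p • g (p ^ 2 + d)
      = 2⁻¹ * ∫ t in Ioi d, g t := integral_Ioi_smul_comp_sq_add g d
    _ = 2⁻¹ * (8 * π - (√(d * (d + 16 * π)) - d)) := by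
      rw [integral_Ioi_add_div_bogoliubovEnergy_sub_one hd hda, hω]
    _ = 4 * π - (√(d * (d + 16 * π)) - d) / 2 := by ring
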